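/- Let a ≥ 0, k ≥ 1, σ > 0, Δ ≥ 0, and let x, x′ ∈ [0, ∞) with |x − x′| ≤ Δ. Then for every α ∈ (1, ∞), the Rényi divergence of order α between the Gaussian densities with means (x+a)^{1/k} and (x′+a)^{1/k} and common standard deviation σ satisfies d_α(φ_{(x+a)^{1/k},σ} ‖ φ_{(x′+a)^{1/k},σ}) ≤ α · ((Δ+a)^{1/k} − a^{1/k})² / (2σ²). -/

import Mathlib

/-!
With common standard deviation `σ`, the product `φ_{μ,σ} ^ α * φ_{ν,σ} ^ (1 - α)` is a constant
multiple of the Gaussian density with mean `α μ + (1 - α) ν` (complete the square in the exponent),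
the constant being `exp (α (α - 1) (μ - ν)² / (2 σ²))`. Hence the Rényi divergence equals
`α (μ - ν)² / (2 σ²)` exactly (`renyiDiv_gaussPdf`). It remains to bound the gap between the two
means: `t ↦ t ^ (1 / k)` is increasing and concave on `[0, ∞)`, so its increment over an interval
of length at most `Δ` in `[a, ∞)` is largest over `[a, a + Δ]` (`rpow_gap_le`).
-/

open Real MeasureTheory

/-- The Gaussian probability density on `ℝ` with mean `μ` and standard deviation `σ`. -/
noncomputable def gaussPdf (μ σ x : ℝ) : ℝ :=
  (σ * Real.sqrt (2 * Real.pi))⁻¹ * Real.exp (-(x - μ) ^ 2 / (2 * σ ^ 2))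

/-- The Rényi divergence of order `α` between two densities on `ℝ`
(with respect to Lebesgue measure). -/
noncomputable def renyiDiv (α : ℝ) (p q : ℝ → ℝ) : ℝ :=
  (α - 1)⁻¹ * Real.log (∫ x : ℝ, p x ^ α * q x ^ (1 - α))

lemma gaussPdf_eq_gaussianPDFReal (μ σ : ℝ) (hσ : 0 < σ) :
    gaussPdf μ σ = ProbabilityTheory.gaussianPDFReal μ (Real.toNNReal (σ ^ 2)) := by
  funext x
  rw [gaussPdf, ProbabilityTheory.gaussianPDFReal, Real.coe_toNNReal _ (sq_nonneg σ),
    Real.sqrt_mul (by positivity) (σ ^ 2), Real.sqrt_sq hσ.le, mul_comm σ]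

lemma integral_gaussPdf (μ σ : ℝ) (hσ : 0 < σ) : ∫ x : ℝ, gaussPdf μ σ x = 1 := by
  rw [gaussPdf_eq_gaussianPDFReal μ σ hσ]
  refine ProbabilityTheory.integral_gaussianPDFReal_eq_one μ ?_
  exact (Real.toNNReal_pos.mpr (by positivity)).ne'

/-- Completing the square: the integrand of the Rényi divergence is a multiple of the Gaussian
density with mean `α μ + (1 - α) ν`. -/
lemma gaussPdf_rpow_mul (μ ν σ α x : ℝ) (hσ : 0 < σ) :
    gaussPdf μ σ x ^ α * gaussPdf ν σ x ^ (1 - α)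
      = Real.exp (α * (α - 1) * (μ - ν) ^ 2 / (2 * σ ^ 2))
        * gaussPdf (α * μ + (1 - α) * ν) σ x := by
  unfold gaussPdf
  have hc : 0 < (σ * Real.sqrt (2 * Real.pi))⁻¹ := by positivity
  set c := (σ * Real.sqrt (2 * Real.pi))⁻¹
  have hcc : c ^ α * c ^ (1 - α) = c := by
    rw [← Real.rpow_add hc, add_sub_cancel, Real.rpow_one]
  rw [Real.mul_rpow hc.le (Real.exp_pos _).le, Real.mul_rpow hc.le (Real.exp_pos _).le,
    ← Real.exp_mul, ← Real.exp_mul, mul_mul_mul_comm, hcc, ← Real.exp_add, mul_left_comm,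
    ← Real.exp_add]
  congr 2
  field_simp
  ring

/-- The Rényi divergence of two Gaussians with common standard deviation. -/
lemma renyiDiv_gaussPdf (μ ν σ α : ℝ) (hσ : 0 < σ) (hα : 1 < α) :
    renyiDiv α (gaussPdf μ σ) (gaussPdf ν σ) = α * (μ - ν) ^ 2 / (2 * σ ^ 2) := by
  have hα' : α - 1 ≠ 0 := by linarith
  simp only [renyiDiv, gaussPdf_rpow_mul μ ν σ α _ hσ]
  rw [integral_const_mul, integral_gaussPdf _ _ hσ, mul_one, Real.log_exp]
  field_simp

/-- By concavity of `t ↦ t ^ p`, its increment over an interval of length `h` does not grow when the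
interval is shifted to the right. -/
lemma rpow_increment_le {a y h p : ℝ} (ha : 0 ≤ a) (hy : 0 ≤ y) (hh : 0 ≤ h)
    (hp₀ : 0 ≤ p) (hp₁ : p ≤ 1) :
    (y + h + a) ^ p - (y + a) ^ p ≤ (h + a) ^ p - a ^ p := by
  rcases (add_nonneg hy hh).eq_or_lt with h0 | hpos
  · obtain rfl : y = 0 := by linarith
    simp
  have hconc := (Real.concaveOn_rpow hp₀ hp₁).2
  have hsum : y / (y + h) + h / (y + h) = 1 := by field_simp
  have hsum' : h / (y + h) + y / (y + h) = 1 := by rw [add_comm, hsum]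
  have hw₁ : 0 ≤ y / (y + h) := by positivity
  have hw₂ : 0 ≤ h / (y + h) := by positivity
  have hma : a ∈ Set.Ici (0 : ℝ) := ha
  have hmb : y + h + a ∈ Set.Ici (0 : ℝ) := Set.mem_Ici.mpr (by positivity)
  -- Both inner points are convex combinations of `a` and `y + h + a`, with swapped weights.
  have h₁ := hconc hma hmb hw₁ hw₂ hsum
  have h₂ := hconc hma hmb hw₂ hw₁ hsum'
  simp only [smul_eq_mul] at h₁ h₂
  rw [show y / (y + h) * a + h / (y + h) * (y + h + a) = h + a by field_simp; ring] at h₁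
  rw [show h / (y + h) * a + y / (y + h) * (y + h + a) = y + a by field_simp; ring] at h₂
  linear_combination h₁ + h₂ - (a ^ p + (y + h + a) ^ p) * hsum

lemma rpow_gap_le {a Δ x y p : ℝ} (ha : 0 ≤ a) (hy : 0 ≤ y) (hyx : y ≤ x)
    (hΔ : x - y ≤ Δ) (hp₀ : 0 ≤ p) (hp₁ : p ≤ 1) :
    |(x + a) ^ p - (y + a) ^ p| ≤ (Δ + a) ^ p - a ^ p := by
  have hmono : (y + a) ^ p ≤ (x + a) ^ p :=
    Real.rpow_le_rpow (by positivity) (by linarith) hp₀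
  have hinc := rpow_increment_le ha hy (sub_nonneg.mpr hyx) hp₀ hp₁
  rw [add_sub_cancel] at hinc
  have hmono' : (x - y + a) ^ p ≤ (Δ + a) ^ p :=
    Real.rpow_le_rpow (by linarith) (by linarith) hp₀
  rw [abs_of_nonneg (by linarith)]
  linarith

/-- PRzCDP guarantee of the kth root transformation mechanism. -/
theorem stmt1 (a k σ Δ : ℝ) (ha : 0 ≤ a) (hk : 1 ≤ k) (hσ : 0 < σ) (hΔ : 0 ≤ Δ)
    (x x' : ℝ) (hx : 0 ≤ x) (hx' : 0 ≤ x') (hxx' : |x - x'| ≤ Δ)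
    (α : ℝ) (hα : 1 < α) :
    renyiDiv α (gaussPdf ((x + a) ^ (1 / k)) σ) (gaussPdf ((x' + a) ^ (1 / k)) σ)
      ≤ α * ((Δ + a) ^ (1 / k) - a ^ (1 / k)) ^ 2 / (2 * σ ^ 2) := by
  have hp₀ : 0 ≤ 1 / k := by positivity
  have hp₁ : 1 / k ≤ 1 := (div_le_one (by linarith)).mpr hk
  obtain ⟨hl, hr⟩ := abs_le.mp hxx'
  have hgap : |(x + a) ^ (1 / k) - (x' + a) ^ (1 / k)| ≤ (Δ + a) ^ (1 / k) - a ^ (1 / k) := by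
    rcases le_total x' x with h | h
    · exact rpow_gap_le ha hx' h hr hp₀ hp₁
    · rw [abs_sub_comm]
      exact rpow_gap_le ha hx h (by linarith) hp₀ hp₁
  rw [renyiDiv_gaussPdf _ _ _ _ hσ hα, ← sq_abs ((x + a) ^ (1 / k) - _)]
  gcongr
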